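/- Characterization of vortex solutions (Proposition 3.5(b), flat torus case): let (u, A) be a periodic configuration solving the YMH equations with u not identically zero. Then F ≡ h on ℝ² if and only if σ₊ ≡ 0 on ℝ², and F ≡ −h on ℝ² if and only if σ₋ ≡ 0 on ℝ². -/

import Mathlib

open MeasureTheory Complex

noncomputable section

/-- Partial derivative in the first coordinate direction. -/
def pd1 {E : Type*} [NormedAddCommGroup E] [NormedSpace ℝ E] (f : ℝ × ℝ → E) (x : ℝ × ℝ) : E :=
  fderiv ℝ f x (1, 0)

/-- Partial derivative in the second coordinate direction. -/
def pd2 {E : Type*} [NormedAddCommGroup E] [NormedSpace ℝ E] (f : ℝ × ℝ → E) (x : ℝ × ℝ) : E :=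
  fderiv ℝ f x (0, 1)

/-- First covariant derivative `D₁f = ∂₁f − iA₁f`. -/
def D1 (A1 : ℝ × ℝ → ℝ) (f : ℝ × ℝ → ℂ) (x : ℝ × ℝ) : ℂ :=
  pd1 f x - Complex.I * (A1 x) * f x

/-- Second covariant derivative `D₂f = ∂₂f − iA₂f`. -/
def D2 (A2 : ℝ × ℝ → ℝ) (f : ℝ × ℝ → ℂ) (x : ℝ × ℝ) : ℂ :=
  pd2 f x - Complex.I * (A2 x) * f x

/-- Curvature function `F = ∂₁A₂ − ∂₂A₁`. -/
def curv (A1 A2 : ℝ × ℝ → ℝ) (x : ℝ × ℝ) : ℝ := pd1 A2 x - pd2 A1 x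

/-- `h = (1 − |u|²)/(2ε²)`. -/
def hfun (ε : ℝ) (u : ℝ × ℝ → ℂ) (x : ℝ × ℝ) : ℝ := (1 - ‖u x‖ ^ 2) / (2 * ε ^ 2)

/-- `σ₊ = D₁u + iD₂u`. -/
def sigP (u : ℝ × ℝ → ℂ) (A1 A2 : ℝ × ℝ → ℝ) (x : ℝ × ℝ) : ℂ :=
  D1 A1 u x + Complex.I * D2 A2 u x

/-- `σ₋ = D₁u − iD₂u`. -/
def sigM (u : ℝ × ℝ → ℂ) (A1 A2 : ℝ × ℝ → ℝ) (x : ℝ × ℝ) : ℂ :=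
  D1 A1 u x - Complex.I * D2 A2 u x

/-- The Yang--Mills--Higgs energy over the fundamental domain `[0,1]²`. -/
def energy (ε : ℝ) (u : ℝ × ℝ → ℂ) (A1 A2 : ℝ × ℝ → ℝ) : ℝ :=
  ∫ x in Set.Icc (0:ℝ) 1 ×ˢ Set.Icc (0:ℝ) 1,
    (ε ^ 2 * curv A1 A2 x ^ 2 + ‖D1 A1 u x‖ ^ 2 + ‖D2 A2 u x‖ ^ 2
      + (1 - ‖u x‖ ^ 2) ^ 2 / (4 * ε ^ 2))

/-- `ℤ²`-periodicity. -/
def Periodic2 {E : Type*} (f : ℝ × ℝ → E) : Prop :=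
  ∀ x : ℝ × ℝ, f (x.1 + 1, x.2) = f x ∧ f (x.1, x.2 + 1) = f x

/-- The Yang--Mills--Higgs equations on all of `ℝ²`. -/
def IsYMH (ε : ℝ) (u : ℝ × ℝ → ℂ) (A1 A2 : ℝ × ℝ → ℝ) : Prop :=
  (∀ x, -(D1 A1 (D1 A1 u) x + D2 A2 (D2 A2 u) x) = (hfun ε u x : ℂ) * u x) ∧
  (∀ x, ε ^ 2 * pd2 (curv A1 A2) x = ((starRingEnd ℂ) (u x) * D1 A1 u x).im) ∧
  (∀ x, ε ^ 2 * pd1 (curv A1 A2) x = -((starRingEnd ℂ) (u x) * D2 A2 u x).im)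

/-- The Yang--Mills--Higgs equations on an open set `U ⊆ ℝ²`. -/
def IsYMHOn (ε : ℝ) (u : ℝ × ℝ → ℂ) (A1 A2 : ℝ × ℝ → ℝ) (U : Set (ℝ × ℝ)) : Prop :=
  (∀ x ∈ U, -(D1 A1 (D1 A1 u) x + D2 A2 (D2 A2 u) x) = (hfun ε u x : ℂ) * u x) ∧
  (∀ x ∈ U, ε ^ 2 * pd2 (curv A1 A2) x = ((starRingEnd ℂ) (u x) * D1 A1 u x).im) ∧
  (∀ x ∈ U, ε ^ 2 * pd1 (curv A1 A2) x = -((starRingEnd ℂ) (u x) * D2 A2 u x).im)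

/-- Stability: nonnegative second variation of the energy along all smooth periodic
variations of the section and the connection. -/
def Stable (ε : ℝ) (u : ℝ × ℝ → ℂ) (A1 A2 : ℝ × ℝ → ℝ) : Prop :=
  ∀ v : ℝ × ℝ → ℂ, ∀ a1 a2 : ℝ × ℝ → ℝ,
    ContDiff ℝ (⊤ : ℕ∞) v → Periodic2 v → ContDiff ℝ (⊤ : ℕ∞) a1 → Periodic2 a1 →
    ContDiff ℝ (⊤ : ℕ∞) a2 → Periodic2 a2 →
    0 ≤ iteratedDeriv 2 (fun t : ℝ =>
      energy ε (fun x => u x + t • v x)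
        (fun x => A1 x + t * a1 x) (fun x => A2 x + t * a2 x)) 0

/-!
The second and third Yang–Mills–Higgs equations combine with the unitarity of the connection into
`ε² (∂₁ + i∂₂)(F - h) = ū σ₊`, and the first one combines with the commutator
`[D₁, D₂] = -iF` into `(D₁ - iD₂) σ₊ = (F - h) u`.

If `F = h`, the first identity shows that `σ₊` vanishes wherever `u` does not, hence by continuity
on the closure of that set; off the closure `u` vanishes locally, and so does `σ₊`. If `σ₊ = 0`,
the first identity shows that `F - h` is constant, and the second that this constant is zero,
because `u` does not vanish identically.

The case of `σ₋` is the case of `σ₊` for the charge conjugate solution `(ū, -A)`.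
-/

open scoped ComplexConjugate

theorem eq_zero_of_mul_eq_zero_of_support_subset_tsupport {X M : Type*} [TopologicalSpace X]
    [TopologicalSpace M] [T1Space M] [MulZeroClass M] [NoZeroDivisors M] {f g : X → M}
    (hg : Continuous g) (hgf : Function.support g ⊆ tsupport f) (hfg : ∀ x, f x * g x = 0) (x : X) :
    g x = 0 := by
  by_contra hx
  obtain ⟨y, hgy, hfy⟩ := mem_closure_iff.mp (hgf hx) _ (isOpen_ne.preimage hg) hx
  exact mul_ne_zero hfy hgy (hfg y)

theorem differentiableAt_fderiv_of_contDiffAt_two {V E : Type*} [NormedAddCommGroup V]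
    [NormedSpace ℝ V] [NormedAddCommGroup E] [NormedSpace ℝ E] {f : V → E} {x : V}
    (hf : ContDiffAt ℝ 2 f x) :
    DifferentiableAt ℝ (fderiv ℝ f) x :=
  (hf.fderiv_right (m := 1) le_rfl).differentiableAt one_ne_zero

section CovariantDerivative

variable {V : Type*} [NormedAddCommGroup V] [NormedSpace ℝ V]
  {a b : V → ℝ} {f g : V → ℂ} {v w x : V}

/-- Covariant derivative `∂ᵥf - i a f` of a section `f` of the trivial Hermitian line bundle over
`V` in the constant direction `v`, where `a` is the component along `v` of the connection form.
It treats `D1` and `D2` uniformly. -/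
def covDeriv (a : V → ℝ) (v : V) (f : V → ℂ) (x : V) : ℂ :=
  fderiv ℝ f x v - I * a x * f x

theorem continuous_covDeriv (ha : Continuous a) (hf : ContDiff ℝ 1 f) :
    Continuous (covDeriv a v f) :=
  ((hf.continuous_fderiv one_ne_zero).clm_apply continuous_const).sub
    ((continuous_const.mul (continuous_ofReal.comp ha)).mul hf.continuous)

theorem differentiableAt_covDeriv (ha : DifferentiableAt ℝ a x) (hf : ContDiffAt ℝ 2 f x) :
    DifferentiableAt ℝ (covDeriv a v f) x :=
  ((differentiableAt_fderiv_of_contDiffAt_two hf).clm_apply (differentiableAt_const v)).sub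
    (((ofRealCLM.differentiableAt.comp x ha).const_mul I).mul (hf.differentiableAt two_ne_zero))

theorem support_covDeriv_subset : Function.support (covDeriv a v f) ⊆ tsupport f := by
  intro x hx
  by_contra hxf
  simp [covDeriv, fderiv_of_notMem_tsupport ℝ hxf, image_eq_zero_of_notMem_tsupport hxf] at hx

theorem covDeriv_add_const_mul (hf : DifferentiableAt ℝ f x) (hg : DifferentiableAt ℝ g x)
    (c : ℂ) :
    covDeriv a v (fun y => f y + c * g y) x = covDeriv a v f x + c * covDeriv a v g x := by
  simp only [covDeriv, fderiv_fun_add hf (hg.const_mul c), fderiv_const_mul hg, add_apply,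
    smul_apply, smul_eq_mul]
  ring

theorem covDeriv_neg_star : covDeriv (-a) v (star f) x = conj (covDeriv a v f x) := by
  have hstar : fderiv ℝ (star f) x v = conj (fderiv ℝ f x v) :=
    congrArg (· v) (fderiv_star (𝕜 := ℝ) (f := f))
  simp [covDeriv, hstar]

theorem re_conj_mul_covDeriv :
    (conj (f x) * covDeriv a v f x).re = (conj (f x) * fderiv ℝ f x v).re := by
  have hexpand : conj (f x) * covDeriv a v f x =
      conj (f x) * fderiv ℝ f x v - I * ((a x * normSq (f x) : ℝ) : ℂ) := by
    rw [covDeriv, ofReal_mul, normSq_eq_conj_mul_self]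
    ring
  rw [hexpand, sub_re, I_mul_re, ofReal_im, neg_zero, sub_zero]

theorem fderiv_covDeriv_apply (hb : DifferentiableAt ℝ b x) (hf : ContDiffAt ℝ 2 f x) :
    fderiv ℝ (covDeriv b w f) x v = fderiv ℝ (fderiv ℝ f) x v w
      - I * (fderiv ℝ b x v * f x + b x * fderiv ℝ f x v) := by
  have hf' : HasFDerivAt f (fderiv ℝ f x) x := (hf.differentiableAt two_ne_zero).hasFDerivAt
  have hdf : DifferentiableAt ℝ (fderiv ℝ f) x := differentiableAt_fderiv_of_contDiffAt_two hf
  have hb' : HasFDerivAt (fun y => (b y : ℂ)) (ofRealCLM.comp (fderiv ℝ b x)) x :=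
    ofRealCLM.hasFDerivAt.comp x hb.hasFDerivAt
  have hcov : HasFDerivAt (covDeriv b w f) _ x :=
    (hdf.hasFDerivAt.clm_apply (hasFDerivAt_const w x)).sub ((hb'.const_mul I).mul hf')
  rw [hcov.fderiv]
  simp only [ContinuousLinearMap.comp_zero, zero_add, sub_apply, ContinuousLinearMap.flip_apply,
    add_apply, smul_apply, smul_eq_mul, ContinuousLinearMap.comp_apply, ofRealCLM_apply]
  ring

theorem covDeriv_covDeriv_sub_comm (ha : DifferentiableAt ℝ a x) (hb : DifferentiableAt ℝ b x)
    (hf : ContDiffAt ℝ 2 f x) :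
    covDeriv a v (covDeriv b w f) x - covDeriv b w (covDeriv a v f) x =
      -I * (fderiv ℝ b x v - fderiv ℝ a x w) * f x := by
  have hsymm : fderiv ℝ (fderiv ℝ f) x v w = fderiv ℝ (fderiv ℝ f) x w v :=
    (hf.isSymmSndFDerivAt (by simp)).eq v w
  simp only [covDeriv, fderiv_covDeriv_apply hb hf, fderiv_covDeriv_apply ha hf, hsymm]
  ring

end CovariantDerivative

theorem eq_of_pd1_eq_zero_of_pd2_eq_zero {E : Type*} [NormedAddCommGroup E] [NormedSpace ℝ E]
    {f : ℝ × ℝ → E} (hf : Differentiable ℝ f) (h₁ : ∀ x, pd1 f x = 0) (h₂ : ∀ x, pd2 f x = 0)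
    (x y : ℝ × ℝ) : f x = f y := by
  refine is_const_of_fderiv_eq_zero hf (𝕜 := ℝ) (fun z => ?_) x y
  ext
  · simpa [pd1] using h₁ z
  · simpa [pd2] using h₂ z

section VortexEquations

variable {ε : ℝ} {u : ℝ × ℝ → ℂ} {A1 A2 : ℝ × ℝ → ℝ} {x : ℝ × ℝ}

theorem contDiff_curv {m n : WithTop ℕ∞} (hA1 : ContDiff ℝ n A1) (hA2 : ContDiff ℝ n A2)
    (hmn : m + 1 ≤ n) : ContDiff ℝ m (curv A1 A2) :=
  ((hA2.fderiv_right hmn).clm_apply contDiff_const).sub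
    ((hA1.fderiv_right hmn).clm_apply contDiff_const)

theorem hasFDerivAt_hfun (hu : DifferentiableAt ℝ u x) :
    HasFDerivAt (hfun ε u) (-(ε ^ 2)⁻¹ • (innerSL ℝ (u x)).comp (fderiv ℝ u x)) x := by
  have hderiv := (hu.hasFDerivAt.norm_sq.const_sub 1).mul_const (2 * ε ^ 2)⁻¹
  exact hderiv.congr_fderiv (by module)

theorem sq_mul_fderiv_hfun (hε : ε ≠ 0) (hu : DifferentiableAt ℝ u x) (a : ℝ × ℝ → ℝ)
    (v : ℝ × ℝ) :
    ε ^ 2 * fderiv ℝ (hfun ε u) x v = -(conj (u x) * covDeriv a v u x).re := by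
  rw [re_conj_mul_covDeriv, (hasFDerivAt_hfun hu).fderiv]
  simp [Complex.inner, hε, mul_comm]

theorem support_sigP_subset : Function.support (sigP u A1 A2) ⊆ tsupport u := by
  refine (Function.support_add (D1 A1 u) fun y => I * D2 A2 u y).trans
    (Set.union_subset support_covDeriv_subset ?_)
  exact (Function.support_mul_subset_right (fun _ => I) (D2 A2 u)).trans support_covDeriv_subset

theorem continuous_sigP (hu : ContDiff ℝ 1 u) (hA1 : Continuous A1) (hA2 : Continuous A2) :
    Continuous (sigP u A1 A2) := by
  have hD1 : Continuous (D1 A1 u) := continuous_covDeriv hA1 hu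
  have hD2 : Continuous (D2 A2 u) := continuous_covDeriv hA2 hu
  exact hD1.add (continuous_const.mul hD2)

theorem D1_sigP_sub_I_mul_D2_sigP (hu : ContDiffAt ℝ 2 u x)
    (hA1 : DifferentiableAt ℝ A1 x) (hA2 : DifferentiableAt ℝ A2 x) :
    D1 A1 (sigP u A1 A2) x - I * D2 A2 (sigP u A1 A2) x =
      D1 A1 (D1 A1 u) x + D2 A2 (D2 A2 u) x + curv A1 A2 x * u x := by
  have hD1 : DifferentiableAt ℝ (D1 A1 u) x := differentiableAt_covDeriv hA1 hu
  have hD2 : DifferentiableAt ℝ (D2 A2 u) x := differentiableAt_covDeriv hA2 hu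
  have hcomm : D1 A1 (D2 A2 u) x - D2 A2 (D1 A1 u) x = -I * (curv A1 A2 x : ℂ) * u x := by
    rw [curv, ofReal_sub]
    exact covDeriv_covDeriv_sub_comm hA1 hA2 hu
  have hσ₁ : D1 A1 (sigP u A1 A2) x = D1 A1 (D1 A1 u) x + I * D1 A1 (D2 A2 u) x :=
    covDeriv_add_const_mul hD1 hD2 I
  have hσ₂ : D2 A2 (sigP u A1 A2) x = D2 A2 (D1 A1 u) x + I * D2 A2 (D2 A2 u) x :=
    covDeriv_add_const_mul hD1 hD2 I
  rw [hσ₁, hσ₂]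
  linear_combination I * hcomm - (D2 A2 (D2 A2 u) x + curv A1 A2 x * u x) * I_mul_I

theorem curv_neg : curv (-A1) (-A2) x = -curv A1 A2 x := by
  simp only [curv, pd1, pd2, fderiv_neg, neg_apply]
  ring

theorem hfun_star : hfun ε (star u) x = hfun ε u x := by
  simp [hfun]

theorem D1_neg_star : D1 (-A1) (star u) = star (D1 A1 u) :=
  funext fun _ => covDeriv_neg_star

theorem D2_neg_star : D2 (-A2) (star u) = star (D2 A2 u) :=
  funext fun _ => covDeriv_neg_star

theorem sigP_star_neg : sigP (star u) (-A1) (-A2) x = conj (sigM u A1 A2 x) := by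
  simp [sigP, sigM, D1_neg_star, D2_neg_star]

namespace IsYMH

theorem star_neg (hYMH : IsYMH ε u A1 A2) : IsYMH ε (star u) (-A1) (-A2) := by
  obtain ⟨hsection, hpd2, hpd1⟩ := hYMH
  have hcurv : curv (-A1) (-A2) = -curv A1 A2 := funext fun _ => curv_neg
  refine ⟨fun x => ?_, fun x => ?_, fun x => ?_⟩
  · simpa [D1_neg_star, D2_neg_star, hfun_star] using congrArg conj (hsection x)
  · simpa [hcurv, D1_neg_star, pd2, fderiv_neg, add_comm] using congrArg Neg.neg (hpd2 x)
  · simpa [hcurv, D2_neg_star, pd1, fderiv_neg, add_comm] using congrArg Neg.neg (hpd1 x)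

theorem conj_mul_sigP (hYMH : IsYMH ε u A1 A2) (hε : ε ≠ 0) (hu : DifferentiableAt ℝ u x)
    (hF : DifferentiableAt ℝ (curv A1 A2) x) :
    conj (u x) * sigP u A1 A2 x = ε ^ 2 *
      (pd1 (curv A1 A2 - hfun ε u) x + I * pd2 (curv A1 A2 - hfun ε u) x) := by
  have hfderiv : fderiv ℝ (curv A1 A2 - hfun ε u) x =
      fderiv ℝ (curv A1 A2) x - fderiv ℝ (hfun ε u) x :=
    fderiv_sub hF (hasFDerivAt_hfun hu).differentiableAt
  have hsplit : conj (u x) * sigP u A1 A2 x =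
      conj (u x) * D1 A1 u x + I * (conj (u x) * D2 A2 u x) := by
    rw [sigP]
    ring
  have hre : ε ^ 2 * pd1 (curv A1 A2 - hfun ε u) x = (conj (u x) * sigP u A1 A2 x).re := by
    rw [hsplit, pd1, hfderiv]
    have hh : ε ^ 2 * fderiv ℝ (hfun ε u) x (1, 0) = -(conj (u x) * D1 A1 u x).re :=
      sq_mul_fderiv_hfun hε hu A1 (1, 0)
    have hF₁ := hYMH.2.2 x
    simp only [pd1, sub_apply, mul_sub, add_re, I_mul_re] at hF₁ ⊢
    rw [hF₁, hh]
    ring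
  have him : ε ^ 2 * pd2 (curv A1 A2 - hfun ε u) x = (conj (u x) * sigP u A1 A2 x).im := by
    rw [hsplit, pd2, hfderiv]
    have hh : ε ^ 2 * fderiv ℝ (hfun ε u) x (0, 1) = -(conj (u x) * D2 A2 u x).re :=
      sq_mul_fderiv_hfun hε hu A2 (0, 1)
    have hF₂ := hYMH.2.1 x
    simp only [pd2, sub_apply, mul_sub, add_im, I_mul_im] at hF₂ ⊢
    rw [hF₂, hh]
    ring
  rw [← re_add_im (conj (u x) * sigP u A1 A2 x), ← hre, ← him]
  push_cast
  ring

theorem curv_sub_hfun_mul (hYMH : IsYMH ε u A1 A2) (hu : ContDiffAt ℝ 2 u x)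
    (hA1 : DifferentiableAt ℝ A1 x) (hA2 : DifferentiableAt ℝ A2 x) :
    (curv A1 A2 x - hfun ε u x) * u x =
      D1 A1 (sigP u A1 A2) x - I * D2 A2 (sigP u A1 A2) x := by
  rw [D1_sigP_sub_I_mul_D2_sigP hu hA1 hA2]
  linear_combination hYMH.1 x

theorem sigP_eq_zero_of_curv_eq_hfun (hYMH : IsYMH ε u A1 A2) (hε : ε ≠ 0) (hu : ContDiff ℝ 1 u)
    (hA1 : Continuous A1) (hA2 : Continuous A2) (hFh : ∀ x, curv A1 A2 x = hfun ε u x)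
    (x : ℝ × ℝ) : sigP u A1 A2 x = 0 := by
  refine eq_zero_of_mul_eq_zero_of_support_subset_tsupport (continuous_sigP hu hA1 hA2)
    support_sigP_subset (fun y => ?_) x
  have huy : DifferentiableAt ℝ u y := hu.differentiable one_ne_zero y
  have hF : curv A1 A2 = hfun ε u := funext hFh
  have hmul : conj (u y) * sigP u A1 A2 y = 0 := by
    rw [hYMH.conj_mul_sigP hε huy (hF ▸ (hasFDerivAt_hfun huy).differentiableAt), hF, sub_self]
    simp [pd1, pd2]
  simpa using hmul

theorem curv_eq_hfun_of_sigP_eq_zero (hYMH : IsYMH ε u A1 A2) (hε : ε ≠ 0) (hu : ContDiff ℝ 2 u)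
    (hA1 : ContDiff ℝ 2 A1) (hA2 : ContDiff ℝ 2 A2) (hne : ∃ x, u x ≠ 0)
    (hσ : ∀ x, sigP u A1 A2 x = 0) (x : ℝ × ℝ) : curv A1 A2 x = hfun ε u x := by
  have hu' : Differentiable ℝ u := hu.differentiable two_ne_zero
  have hF : Differentiable ℝ (curv A1 A2) :=
    (contDiff_curv (m := 1) hA1 hA2 le_rfl).differentiable one_ne_zero
  have hFh : Differentiable ℝ (curv A1 A2 - hfun ε u) :=
    hF.sub fun y => (hasFDerivAt_hfun (hu' y)).differentiableAt
  have hgrad : ∀ y, pd1 (curv A1 A2 - hfun ε u) y = 0 ∧ pd2 (curv A1 A2 - hfun ε u) y = 0 := by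
    intro y
    have hmul := hYMH.conj_mul_sigP hε (hu' y) (hF y)
    simpa [hσ y, hε, Complex.ext_iff] using hmul
  obtain ⟨x₀, hx₀⟩ := hne
  have hx₀' : curv A1 A2 x₀ - hfun ε u x₀ = 0 := by
    have hmul := hYMH.curv_sub_hfun_mul hu.contDiffAt (hA1.differentiable two_ne_zero x₀)
      (hA2.differentiable two_ne_zero x₀)
    have hσ' : sigP u A1 A2 = fun _ => 0 := funext hσ
    simp only [hσ', D1, D2, pd1, pd2, fderiv_fun_const, Pi.zero_apply, zero_apply, mul_zero,
      sub_zero, mul_eq_zero, hx₀, or_false] at hmul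
    exact_mod_cast hmul
  have hconst : (curv A1 A2 - hfun ε u) x = (curv A1 A2 - hfun ε u) x₀ :=
    eq_of_pd1_eq_zero_of_pd2_eq_zero hFh (fun y => (hgrad y).1) (fun y => (hgrad y).2) x x₀
  exact sub_eq_zero.mp (hconst.trans hx₀')

theorem curv_eq_hfun_iff_sigP_eq_zero (hYMH : IsYMH ε u A1 A2) (hε : ε ≠ 0) (hu : ContDiff ℝ 2 u)
    (hA1 : ContDiff ℝ 2 A1) (hA2 : ContDiff ℝ 2 A2) (hne : ∃ x, u x ≠ 0) :
    (∀ x, curv A1 A2 x = hfun ε u x) ↔ ∀ x, sigP u A1 A2 x = 0 :=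
  ⟨hYMH.sigP_eq_zero_of_curv_eq_hfun hε (hu.of_le one_le_two) hA1.continuous hA2.continuous,
    hYMH.curv_eq_hfun_of_sigP_eq_zero hε hu hA1 hA2 hne⟩

theorem curv_eq_neg_hfun_iff_sigM_eq_zero (hYMH : IsYMH ε u A1 A2) (hε : ε ≠ 0)
    (hu : ContDiff ℝ 2 u) (hA1 : ContDiff ℝ 2 A1) (hA2 : ContDiff ℝ 2 A2) (hne : ∃ x, u x ≠ 0) :
    (∀ x, curv A1 A2 x = -hfun ε u x) ↔ ∀ x, sigM u A1 A2 x = 0 := by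
  have hstar : ContDiff ℝ 2 (star u) := (starL' ℝ : ℂ ≃L[ℝ] ℂ).contDiff.comp hu
  have hiff := hYMH.star_neg.curv_eq_hfun_iff_sigP_eq_zero hε hstar hA1.neg hA2.neg
    (hne.imp fun _ => star_ne_zero.mpr)
  simpa only [curv_neg, hfun_star, sigP_star_neg, map_eq_zero, neg_eq_iff_eq_neg] using hiff

end IsYMH

end VortexEquations

theorem vortex_characterization_general {ε : ℝ} (hε : ε ≠ 0) {u : ℝ × ℝ → ℂ}
    {A1 A2 : ℝ × ℝ → ℝ} (hu : ContDiff ℝ 2 u) (hA1 : ContDiff ℝ 2 A1) (hA2 : ContDiff ℝ 2 A2)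
    (hYMH : IsYMH ε u A1 A2) (hne : ∃ x, u x ≠ 0) :
    ((∀ x, curv A1 A2 x = hfun ε u x) ↔ ∀ x, sigP u A1 A2 x = 0) ∧
    ((∀ x, curv A1 A2 x = -hfun ε u x) ↔ ∀ x, sigM u A1 A2 x = 0) :=
  ⟨hYMH.curv_eq_hfun_iff_sigP_eq_zero hε hu hA1 hA2 hne,
    hYMH.curv_eq_neg_hfun_iff_sigM_eq_zero hε hu hA1 hA2 hne⟩

/-- Characterization of vortex solutions (Proposition 3.5(b), flat torus case). -/
theorem vortex_characterization
    (ε : ℝ) (hε : 0 < ε) (u : ℝ × ℝ → ℂ) (A1 A2 : ℝ × ℝ → ℝ)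
    (hu : ContDiff ℝ (⊤ : ℕ∞) u) (hup : Periodic2 u)
    (hA1 : ContDiff ℝ (⊤ : ℕ∞) A1) (hA1p : Periodic2 A1)
    (hA2 : ContDiff ℝ (⊤ : ℕ∞) A2) (hA2p : Periodic2 A2)
    (hYMH : IsYMH ε u A1 A2) (hne : ∃ x, u x ≠ 0) :
    ((∀ x, curv A1 A2 x = hfun ε u x) ↔ (∀ x, sigP u A1 A2 x = 0)) ∧
    ((∀ x, curv A1 A2 x = -hfun ε u x) ↔ (∀ x, sigM u A1 A2 x = 0)) := by
  have htwo : (2 : WithTop ℕ∞) ≤ (⊤ : ℕ∞) := WithTop.coe_le_coe.mpr le_top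
  exact vortex_characterization_general hε.ne' (hu.of_le htwo) (hA1.of_le htwo) (hA2.of_le htwo)
    hYMH hne
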